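/- Let k ≥ 13 be an odd integer, let l, m be integers with k > l > m ≥ 2, and let N be a nonzero element of an algebraically closed field K of characteristic zero. Suppose γ₁, γ₂, γ₃, γ₄ ∈ K[t] are polynomials of degree at most 2, not all constant, satisfying γ₁(t)^k + γ₂(t)^l + γ₃(t)^m + γ₄(t)^k = N identically. Then at least one of the following polynomial identities holds: γ₁^k + γ₄^k = 0, or γ₂^l + γ₃^m = 0, or γ₁^k + γ₂^l + γ₄^k = 0, or γ₁^k + γ₃^m + γ₄^k = 0. -/

import Mathlib

open Polynomial

set_option linter.unusedSectionVars false
set_option linter.unusedVariables false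

section aux
variable {K : Type*} [Field K] [CharZero K]

lemma aux_eq_C_of_derivative {f : K[X]} (h : derivative f = 0) : ∃ x, f = C x :=
  ⟨_, eq_C_of_natDegree_eq_zero (natDegree_eq_zero_of_derivative_eq_zero h)⟩

/-- Vanishing of the 2-Wronskian implies linear dependence. -/
lemma aux_wr2 {f g : K[X]} (h : f * derivative g - derivative f * g = 0) :
    ∃ x y : K, (x ≠ 0 ∨ y ≠ 0) ∧ C x * f + C y * g = 0 := by
  classical
  by_cases hf : f = 0
  · exact ⟨1, 0, by simp, by simp [hf]⟩
  have hd : EuclideanDomain.gcd f g ≠ 0 := by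
    intro h0; exact hf (EuclideanDomain.gcd_eq_zero_iff.mp h0).1
  obtain ⟨u, hu⟩ := EuclideanDomain.gcd_dvd_left f g
  obtain ⟨v, hv⟩ := EuclideanDomain.gcd_dvd_right f g
  have hbez := EuclideanDomain.gcd_eq_gcd_ab f g
  set d := EuclideanDomain.gcd f g with hdd
  clear_value d
  have hcop : IsCoprime u v := by
    refine ⟨EuclideanDomain.gcdA f g, EuclideanDomain.gcdB f g, ?_⟩
    apply mul_left_cancel₀ hd
    calc _ = d * u * EuclideanDomain.gcdA f g + d * v * EuclideanDomain.gcdB f g := by ring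
      _ = _ := by rw [← hu, ← hv, mul_one]; exact hbez.symm
  have hw : wronskian u v = 0 := by
    have h2 : d * d * wronskian u v = 0 := by
      rw [hu, hv] at h
      simp only [derivative_mul] at h
      rw [wronskian]
      linear_combination h
    simpa [hd] using h2
  obtain ⟨h1, h2⟩ := hcop.wronskian_eq_zero_iff.mp hw
  obtain ⟨x, hx⟩ := aux_eq_C_of_derivative h1
  obtain ⟨y, hy⟩ := aux_eq_C_of_derivative h2
  have hx0 : x ≠ 0 := by
    rintro rfl
    apply hf; rw [hu, hx]; simp
  refine ⟨-y, x, Or.inr hx0, ?_⟩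
  rw [hu, hv, hx, hy]
  simp only [C_neg]; ring

/-- Vanishing of the 3-Wronskian implies linear dependence. -/
lemma aux_wr3 {f g h f1 g1 h1 f2 g2 h2 : K[X]}
    (hf1 : derivative f = f1) (hg1 : derivative g = g1) (hh1 : derivative h = h1)
    (hf2 : derivative f1 = f2) (hg2 : derivative g1 = g2) (hh2 : derivative h1 = h2)
    (hw : f * (g1 * h2 - g2 * h1) - g * (f1 * h2 - f2 * h1) + h * (f1 * g2 - f2 * g1) = 0) :
    ∃ x y z : K, (x ≠ 0 ∨ y ≠ 0 ∨ z ≠ 0) ∧ C x * f + C y * g + C z * h = 0 := by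
  have key : (f * g1 - f1 * g) * derivative (f * h1 - f1 * h)
      - derivative (f * g1 - f1 * g) * (f * h1 - f1 * h) = 0 := by
    simp only [derivative_mul, derivative_sub, hf1, hg1, hh1, hf2, hg2, hh2]
    linear_combination f * hw
  obtain ⟨x, y, hxy, hr⟩ := aux_wr2 key
  have : f * derivative (C x * g + C y * h) - derivative f * (C x * g + C y * h) = 0 := by
    simp only [derivative_mul, derivative_add, derivative_C, hf1, hg1, hh1]
    linear_combination hr
  obtain ⟨s, t, hst, hr2⟩ := aux_wr2 this
  by_cases ht : t = 0
  · subst ht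
    refine ⟨s, 0, 0, ?_, ?_⟩
    · simpa using hst
    · simpa using hr2
  · refine ⟨s, t * x, t * y, ?_, ?_⟩
    · right
      rcases hxy with hx | hy
      · left; exact mul_ne_zero ht hx
      · right; exact mul_ne_zero ht hy
    · simp only [C_mul]; linear_combination hr2

lemma aux_cols (P : K[X]) (p n i : ℕ) (hi : i ≤ n) (hd : 0 < P.natDegree) :
    ∃ v : K[X], derivative^[i] (P ^ p) = P ^ (p - n) * v ∧
      v.natDegree ≤ n * P.natDegree - i := by
  have hP : P ≠ 0 := by rintro rfl; simp at hd
  have h1 : P ^ (p - n) ∣ derivative^[i] (P ^ p) :=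
    (pow_dvd_pow P (by omega)).trans (pow_sub_dvd_iterate_derivative_pow P p i)
  obtain ⟨v, hv⟩ := h1
  refine ⟨v, hv, ?_⟩
  by_cases hv0 : v = 0
  · simp [hv0]
  have hdeg := natDegree_iterate_derivative (P ^ p) i
  rw [hv, natDegree_mul (pow_ne_zero _ hP) hv0, natDegree_pow, natDegree_pow] at hdeg
  rcases le_total n p with h | h
  · obtain ⟨e, rfl⟩ := Nat.exists_eq_add_of_le h
    rw [Nat.add_sub_cancel_left, add_mul] at hdeg
    have : n ≤ n * P.natDegree := Nat.le_mul_of_pos_right n hd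
    omega
  · rw [Nat.sub_eq_zero_of_le h] at hdeg
    have : p * P.natDegree ≤ n * P.natDegree := Nat.mul_le_mul_right _ h
    omega

def NZC (f : K[X]) : Prop := ∃ x : K, x ≠ 0 ∧ f = C x

lemma aux_pow_const (P : K[X]) (p : ℕ) (hd : P.natDegree = 0) : P ^ p = 0 ∨ NZC (P ^ p) := by
  rw [eq_C_of_natDegree_eq_zero hd, ← C_pow]
  by_cases h : P.coeff 0 ^ p = 0
  · left; rw [h, C_0]
  · right; exact ⟨_, h, rfl⟩

lemma NZC_of_mul {f : K[X]} {x M : K} (hM : M ≠ 0) (h : C x * f = C M) : NZC f := by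
  have hx : x ≠ 0 := by
    rintro rfl; apply hM; simpa using h.symm
  refine ⟨x⁻¹ * M, mul_ne_zero (inv_ne_zero hx) hM, ?_⟩
  rw [C_mul, ← h, ← mul_assoc, ← C_mul, inv_mul_cancel₀ hx, C_1, one_mul]

lemma aux_dvd_deg {A R D : K[X]} {x M : K} (hM : M ≠ 0) (hD : D ≠ 0)
    (h : C x * A * R = C M * D) : A.natDegree ≤ D.natDegree := by
  apply natDegree_le_of_dvd _ hD
  refine ⟨C (M⁻¹ * x) * R, ?_⟩
  have : (C M⁻¹ : K[X]) * C M = 1 := by rw [← C_mul, inv_mul_cancel₀ hM, C_1]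
  rw [C_mul]
  linear_combination (-D) * this - C M⁻¹ * h

lemma aux_deriv_ne (P : K[X]) (p : ℕ) (hp : p ≠ 0) (hd : 0 < P.natDegree) :
    derivative (P ^ p) ≠ 0 := by
  intro h
  have := natDegree_eq_zero_of_derivative_eq_zero h
  rw [natDegree_pow] at this
  rcases Nat.mul_eq_zero.mp this with h | h <;> omega

lemma aux_T2_deg (P Q : K[X]) (p q : ℕ) (hq : 2 ≤ q)
    (hP : 0 < P.natDegree) (hQ : 0 < Q.natDegree) (x y M : K) (hM : M ≠ 0)
    (h : C x * P ^ p + C y * Q ^ q = C M) : (p - 1) * P.natDegree ≤ Q.natDegree - 1 := by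
  obtain ⟨u0, hu0, -⟩ := aux_cols P p 1 0 (by omega) hP
  obtain ⟨u1, hu1, -⟩ := aux_cols P p 1 1 (by omega) hP
  obtain ⟨v0, hv0, -⟩ := aux_cols Q q 1 0 (by omega) hQ
  obtain ⟨v1, hv1, hv1d⟩ := aux_cols Q q 1 1 (by omega) hQ
  have h1 := congrArg derivative h
  simp only [derivative_mul, derivative_add, derivative_C, zero_mul, zero_add] at h1
  simp only [Function.iterate_succ, Function.iterate_zero, Function.comp, id] at hu0 hu1 hv0 hv1
  have hne : v1 ≠ 0 := by
    rintro rfl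
    exact aux_deriv_ne Q q (by omega) hQ (by rw [hv1, mul_zero])
  rw [hu1, hv1] at h1
  rw [hu0, hv0] at h
  have := aux_dvd_deg (A := P ^ (p - 1)) (R := u0 * v1 - u1 * v0) (D := v1) (x := x) hM hne
    (by linear_combination v1 * h - v0 * h1)
  rw [natDegree_pow] at this
  omega

lemma aux_T2 (P Q : K[X]) (p q : ℕ) (hp : 2 ≤ p) (hq : 2 ≤ q) (x y M : K) (hM : M ≠ 0)
    (h : C x * P ^ p + C y * Q ^ q = C M) : NZC (P ^ p) ∨ NZC (Q ^ q) := by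
  rcases Nat.eq_zero_or_pos P.natDegree with hP | hP
  · rcases aux_pow_const P p hP with h0 | h0
    · right; rw [h0, mul_zero, zero_add] at h; exact NZC_of_mul hM h
    · exact Or.inl h0
  rcases Nat.eq_zero_or_pos Q.natDegree with hQ | hQ
  · rcases aux_pow_const Q q hQ with h0 | h0
    · left; rw [h0, mul_zero, add_zero] at h; exact NZC_of_mul hM h
    · exact Or.inr h0
  exfalso
  have h1 := aux_T2_deg P Q p q hq hP hQ x y M hM h
  have h2 := aux_T2_deg Q P q p hp hQ hP y x M hM (by rw [← h]; ring)
  have h3 : 1 * P.natDegree ≤ (p - 1) * P.natDegree := Nat.mul_le_mul_right _ (by omega)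
  have h4 : 1 * Q.natDegree ≤ (q - 1) * Q.natDegree := Nat.mul_le_mul_right _ (by omega)
  omega

/-- A linear relation among three polynomials reduces to a two-term relation. -/
lemma aux_elim {f g : K[X]} {x y : K} (hx : x ≠ 0) (h : C x * f + g = 0) :
    f = C (-x⁻¹) * g := by
  have : (C x⁻¹ : K[X]) * C x = 1 := by rw [← C_mul, inv_mul_cancel₀ hx, C_1]
  rw [C_neg]
  linear_combination (-f) * this + C x⁻¹ * h

lemma aux_natDegree_mul_le {f g : K[X]} {a b : ℕ} (hf : f.natDegree ≤ a) (hg : g.natDegree ≤ b) :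
    (f * g).natDegree ≤ a + b := natDegree_mul_le.trans (add_le_add hf hg)

lemma aux_natDegree_sub_le {f g : K[X]} {a : ℕ} (hf : f.natDegree ≤ a) (hg : g.natDegree ≤ a) :
    (f - g).natDegree ≤ a := (natDegree_sub_le f g).trans (max_le hf hg)

lemma aux_natDegree_add_le {f g : K[X]} {a : ℕ} (hf : f.natDegree ≤ a) (hg : g.natDegree ≤ a) :
    (f + g).natDegree ≤ a := (natDegree_add_le f g).trans (max_le hf hg)

lemma aux_T3_13 (P Q R : K[X]) (p q r : ℕ) (hp : 13 ≤ p) (hq : 2 ≤ q) (hr : 2 ≤ r)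
    (hQ2 : Q.natDegree ≤ 2) (hR2 : R.natDegree ≤ 2)
    (x y z M : K) (hM : M ≠ 0)
    (h : C x * P ^ p + C y * Q ^ q + C z * R ^ r = C M) :
    NZC (P ^ p) ∨ NZC (Q ^ q) ∨ NZC (R ^ r) := by
  rcases Nat.eq_zero_or_pos P.natDegree with hP | hP
  · rcases aux_pow_const P p hP with h0 | h0
    · right; rw [h0, mul_zero, zero_add] at h; exact aux_T2 _ _ _ _ hq hr _ _ _ hM h
    · exact Or.inl h0
  rcases Nat.eq_zero_or_pos Q.natDegree with hQ | hQ
  · rcases aux_pow_const Q q hQ with h0 | h0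
    · rw [h0, mul_zero, add_zero] at h
      have := aux_T2 _ _ _ _ (by omega) hr _ _ _ hM h
      tauto
    · tauto
  rcases Nat.eq_zero_or_pos R.natDegree with hR | hR
  · rcases aux_pow_const R r hR with h0 | h0
    · rw [h0, mul_zero, add_zero] at h
      have := aux_T2 _ _ _ _ (by omega) hq _ _ _ hM h
      tauto
    · tauto
  obtain ⟨u0, hu0, -⟩ := aux_cols P p 2 0 (by omega) hP
  obtain ⟨u1, hu1, -⟩ := aux_cols P p 2 1 (by omega) hP
  obtain ⟨u2, hu2, -⟩ := aux_cols P p 2 2 (by omega) hP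
  obtain ⟨v0, hv0, -⟩ := aux_cols Q q 2 0 (by omega) hQ
  obtain ⟨v1, hv1, hv1d⟩ := aux_cols Q q 2 1 (by omega) hQ
  obtain ⟨v2, hv2, hv2d⟩ := aux_cols Q q 2 2 (by omega) hQ
  obtain ⟨w0, hw0, -⟩ := aux_cols R r 2 0 (by omega) hR
  obtain ⟨w1, hw1, hw1d⟩ := aux_cols R r 2 1 (by omega) hR
  obtain ⟨w2, hw2, hw2d⟩ := aux_cols R r 2 2 (by omega) hR
  simp only [Function.iterate_succ, Function.iterate_zero, Function.comp, id]
    at hu0 hu1 hu2 hv0 hv1 hv2 hw0 hw1 hw2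
  by_cases hD : v1 * w2 - v2 * w1 = 0
  · have hW : derivative (Q ^ q) * derivative (derivative (R ^ r))
        - derivative (derivative (Q ^ q)) * derivative (R ^ r) = 0 := by
      rw [hv2, hw2, hv1, hw1]
      linear_combination Q ^ (q - 2) * R ^ (r - 2) * hD
    obtain ⟨s, t, hst, hrel⟩ := aux_wr2 hW
    have hc : derivative (C s * Q ^ q + C t * R ^ r) = 0 := by
      rw [derivative_add, derivative_C_mul, derivative_C_mul]; exact hrel
    obtain ⟨M2, hM2⟩ := aux_eq_C_of_derivative hc
    by_cases hM20 : M2 = 0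
    · rw [hM20, C_0] at hM2
      rcases hst with hs | ht
      · have e := aux_elim (y := s) hs hM2
        have := aux_T2 P R p r (by omega) hr x (y * (-s⁻¹) * t + z) M hM
          (by rw [e] at h; rw [← h]; simp only [C_mul, C_add, C_neg]; ring)
        tauto
      · have e := aux_elim (y := s) ht ((add_comm _ _).trans hM2)
        have := aux_T2 P Q p q (by omega) hq x (z * (-t⁻¹) * s + y) M hM
          (by rw [e] at h; rw [← h]; simp only [C_mul, C_add, C_neg]; ring)
        tauto
    · exact Or.inr (aux_T2 _ _ _ _ hq hr _ _ _ hM20 hM2)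
  · exfalso
    have h1 := congrArg derivative h
    simp only [derivative_mul, derivative_add, derivative_C, zero_mul, zero_add] at h1
    have h2 := congrArg derivative h1
    simp only [derivative_mul, derivative_add, derivative_C, zero_mul, zero_add,
      derivative_zero] at h2
    rw [hu2, hv2, hw2] at h2
    rw [hu1, hv1, hw1] at h1
    rw [hu0, hv0, hw0] at h
    have := aux_dvd_deg (A := P ^ (p - 2))
      (R := u0 * (v1 * w2 - v2 * w1) - v0 * (u1 * w2 - u2 * w1) + w0 * (u1 * v2 - u2 * v1))
      (D := v1 * w2 - v2 * w1) (x := x) hM hD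
      (by linear_combination (v1 * w2 - v2 * w1) * h - (v0 * w2 - v2 * w0) * h1
            + (v0 * w1 - v1 * w0) * h2)
    rw [natDegree_pow] at this
    have hb : (v1 * w2 - v2 * w1).natDegree ≤ 2 * Q.natDegree + 2 * R.natDegree - 3 := by
      apply aux_natDegree_sub_le
      · exact (aux_natDegree_mul_le hv1d hw2d).trans (by omega)
      · exact (aux_natDegree_mul_le hv2d hw1d).trans (by omega)
    have h3 : 11 * 1 ≤ (p - 2) * P.natDegree := Nat.mul_le_mul (by omega) hP
    omega

lemma aux_T3 (P Q R : K[X]) (p q r : ℕ) (hp : 2 ≤ p) (hq : 2 ≤ q) (hr : 2 ≤ r)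
    (hP2 : P.natDegree ≤ 2) (hQ2 : Q.natDegree ≤ 2) (hR2 : R.natDegree ≤ 2)
    (h13 : 13 ≤ p ∨ 13 ≤ q ∨ 13 ≤ r)
    (x y z M : K) (hM : M ≠ 0)
    (h : C x * P ^ p + C y * Q ^ q + C z * R ^ r = C M) :
    NZC (P ^ p) ∨ NZC (Q ^ q) ∨ NZC (R ^ r) := by
  rcases h13 with h0 | h0 | h0
  · exact aux_T3_13 P Q R p q r h0 hq hr hQ2 hR2 x y z M hM h
  · have := aux_T3_13 Q P R q p r h0 hp hr hP2 hR2 y x z M hM (by rw [← h]; ring)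
    tauto
  · have := aux_T3_13 R P Q r p q h0 hp hq hP2 hQ2 z x y M hM (by rw [← h]; ring)
    tauto

set_option maxHeartbeats 1000000 in
lemma aux_det4 {A B D E M u0 u1 u2 u3 v0 v1 v2 v3 w0 w1 w2 w3 z0 z1 z2 z3 : K[X]}
    (h : A * u0 + B * v0 + D * w0 + E * z0 = M)
    (h1 : A * u1 + B * v1 + D * w1 + E * z1 = 0)
    (h2 : A * u2 + B * v2 + D * w2 + E * z2 = 0)
    (h3 : A * u3 + B * v3 + D * w3 + E * z3 = 0) :
    1 * A * (u0 * (v1 * (w2 * z3 - w3 * z2) - w1 * (v2 * z3 - v3 * z2) + z1 * (v2 * w3 - v3 * w2))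
        - u1 * (v0 * (w2 * z3 - w3 * z2) - w0 * (v2 * z3 - v3 * z2) + z0 * (v2 * w3 - v3 * w2))
        + u2 * (v0 * (w1 * z3 - w3 * z1) - w0 * (v1 * z3 - v3 * z1) + z0 * (v1 * w3 - v3 * w1))
        - u3 * (v0 * (w1 * z2 - w2 * z1) - w0 * (v1 * z2 - v2 * z1) + z0 * (v1 * w2 - v2 * w1)))
    = M * (v1 * (w2 * z3 - w3 * z2) - w1 * (v2 * z3 - v3 * z2) + z1 * (v2 * w3 - v3 * w2)) := by
  linear_combination
    (v1 * (w2 * z3 - w3 * z2) - w1 * (v2 * z3 - v3 * z2) + z1 * (v2 * w3 - v3 * w2)) * h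
    - (v0 * (w2 * z3 - w3 * z2) - w0 * (v2 * z3 - v3 * z2) + z0 * (v2 * w3 - v3 * w2)) * h1
    + (v0 * (w1 * z3 - w3 * z1) - w0 * (v1 * z3 - v3 * z1) + z0 * (v1 * w3 - v3 * w1)) * h2
    - (v0 * (w1 * z2 - w2 * z1) - w0 * (v1 * z2 - v2 * z1) + z0 * (v1 * w2 - v2 * w1)) * h3

set_option maxHeartbeats 2000000 in
/-- Either one term is a nonzero constant, or all are nonconstant with a degree bound. -/
lemma aux_T4_deg (P Q R S : K[X]) (k q r : ℕ) (hk : 13 ≤ k) (hq : 2 ≤ q) (hr : 2 ≤ r)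
    (hP2 : P.natDegree ≤ 2) (hQ2 : Q.natDegree ≤ 2) (hR2 : R.natDegree ≤ 2)
    (hS2 : S.natDegree ≤ 2) (M : K) (hM : M ≠ 0)
    (h : P ^ k + Q ^ q + R ^ r + S ^ k = C M) :
    (NZC (P ^ k) ∨ NZC (Q ^ q) ∨ NZC (R ^ r) ∨ NZC (S ^ k)) ∨
    (0 < P.natDegree ∧ 0 < S.natDegree ∧
      10 * P.natDegree ≤ 3 * (Q.natDegree + R.natDegree + S.natDegree) - 6) := by
  have hk2 : 2 ≤ k := by omega
  have T3a : ∀ x y z M : K, M ≠ 0 → C x * Q ^ q + C y * R ^ r + C z * S ^ k = C M →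
      NZC (Q ^ q) ∨ NZC (R ^ r) ∨ NZC (S ^ k) :=
    fun x y z M => aux_T3 Q R S q r k hq hr hk2 hQ2 hR2 hS2 (by tauto) x y z M
  have T3b : ∀ x y z M : K, M ≠ 0 → C x * P ^ k + C y * R ^ r + C z * S ^ k = C M →
      NZC (P ^ k) ∨ NZC (R ^ r) ∨ NZC (S ^ k) :=
    fun x y z M => aux_T3 P R S k r k hk2 hr hk2 hP2 hR2 hS2 (by tauto) x y z M
  have T3c : ∀ x y z M : K, M ≠ 0 → C x * P ^ k + C y * Q ^ q + C z * S ^ k = C M →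
      NZC (P ^ k) ∨ NZC (Q ^ q) ∨ NZC (S ^ k) :=
    fun x y z M => aux_T3 P Q S k q k hk2 hq hk2 hP2 hQ2 hS2 (by tauto) x y z M
  have T3d : ∀ x y z M : K, M ≠ 0 → C x * P ^ k + C y * Q ^ q + C z * R ^ r = C M →
      NZC (P ^ k) ∨ NZC (Q ^ q) ∨ NZC (R ^ r) :=
    fun x y z M => aux_T3 P Q R k q r hk2 hq hr hP2 hQ2 hR2 (by tauto) x y z M
  rcases Nat.eq_zero_or_pos P.natDegree with hP | hP
  · rcases aux_pow_const P k hP with h0 | h0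
    · have := T3a 1 1 1 M hM (by rw [← h, h0]; simp only [C_1]; ring)
      tauto
    · tauto
  rcases Nat.eq_zero_or_pos Q.natDegree with hQ | hQ
  · rcases aux_pow_const Q q hQ with h0 | h0
    · have := T3b 1 1 1 M hM (by rw [← h, h0]; simp only [C_1]; ring)
      tauto
    · tauto
  rcases Nat.eq_zero_or_pos R.natDegree with hR | hR
  · rcases aux_pow_const R r hR with h0 | h0
    · have := T3c 1 1 1 M hM (by rw [← h, h0]; simp only [C_1]; ring)
      tauto
    · tauto
  rcases Nat.eq_zero_or_pos S.natDegree with hS | hS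
  · rcases aux_pow_const S k hS with h0 | h0
    · have := T3d 1 1 1 M hM (by rw [← h, h0]; simp only [C_1]; ring)
      tauto
    · tauto
  obtain ⟨u0, hu0, -⟩ := aux_cols P k 3 0 (by omega) hP
  obtain ⟨u1, hu1, -⟩ := aux_cols P k 3 1 (by omega) hP
  obtain ⟨u2, hu2, -⟩ := aux_cols P k 3 2 (by omega) hP
  obtain ⟨u3, hu3, -⟩ := aux_cols P k 3 3 (by omega) hP
  obtain ⟨v0, hv0, -⟩ := aux_cols Q q 3 0 (by omega) hQ
  obtain ⟨v1, hv1, hv1d⟩ := aux_cols Q q 3 1 (by omega) hQ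
  obtain ⟨v2, hv2, hv2d⟩ := aux_cols Q q 3 2 (by omega) hQ
  obtain ⟨v3, hv3, hv3d⟩ := aux_cols Q q 3 3 (by omega) hQ
  obtain ⟨w0, hw0, -⟩ := aux_cols R r 3 0 (by omega) hR
  obtain ⟨w1, hw1, hw1d⟩ := aux_cols R r 3 1 (by omega) hR
  obtain ⟨w2, hw2, hw2d⟩ := aux_cols R r 3 2 (by omega) hR
  obtain ⟨w3, hw3, hw3d⟩ := aux_cols R r 3 3 (by omega) hR
  obtain ⟨z0, hz0, -⟩ := aux_cols S k 3 0 (by omega) hS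
  obtain ⟨z1, hz1, hz1d⟩ := aux_cols S k 3 1 (by omega) hS
  obtain ⟨z2, hz2, hz2d⟩ := aux_cols S k 3 2 (by omega) hS
  obtain ⟨z3, hz3, hz3d⟩ := aux_cols S k 3 3 (by omega) hS
  simp only [Function.iterate_succ, Function.iterate_zero, Function.comp, id]
    at hu0 hu1 hu2 hu3 hv0 hv1 hv2 hv3 hw0 hw1 hw2 hw3 hz0 hz1 hz2 hz3
  by_cases hD : v1 * (w2 * z3 - w3 * z2) - w1 * (v2 * z3 - v3 * z2) + z1 * (v2 * w3 - v3 * w2) = 0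
  · left
    obtain ⟨s, t, o, hsto, hrel⟩ := aux_wr3 (f := derivative (Q ^ q)) (g := derivative (R ^ r))
      (h := derivative (S ^ k)) rfl rfl rfl rfl rfl rfl (by
        rw [hv3, hw3, hz3, hv2, hw2, hz2, hv1, hw1, hz1]
        linear_combination Q ^ (q - 3) * R ^ (r - 3) * S ^ (k - 3) * hD)
    have hc : derivative (C s * Q ^ q + C t * R ^ r + C o * S ^ k) = 0 := by
      rw [derivative_add, derivative_add, derivative_C_mul, derivative_C_mul, derivative_C_mul]
      exact hrel
    obtain ⟨M2, hM2⟩ := aux_eq_C_of_derivative hc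
    by_cases hM20 : M2 = 0
    · rw [hM20, C_0] at hM2
      rcases hsto with hs | ht | ho
      · have e := aux_elim (y := s) hs ((add_assoc _ _ _).symm.trans hM2)
        have := T3b 1 ((-s⁻¹) * t + 1) ((-s⁻¹) * o + 1) M hM
          (by rw [e] at h; rw [← h]; simp only [C_mul, C_add, C_neg, C_1]; ring)
        tauto
      · have e := aux_elim (y := s) (f := R ^ r) (g := C s * Q ^ q + C o * S ^ k) ht
          (by rw [← hM2]; ring)
        have := T3c 1 ((-t⁻¹) * s + 1) ((-t⁻¹) * o + 1) M hM
          (by rw [e] at h; rw [← h]; simp only [C_mul, C_add, C_neg, C_1]; ring)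
        tauto
      · have e := aux_elim (y := s) (f := S ^ k) (g := C s * Q ^ q + C t * R ^ r) ho
          (by rw [← hM2]; ring)
        have := T3d 1 ((-o⁻¹) * s + 1) ((-o⁻¹) * t + 1) M hM
          (by rw [e] at h; rw [← h]; simp only [C_mul, C_add, C_neg, C_1]; ring)
        tauto
    · have := T3a _ _ _ _ hM20 hM2
      tauto
  · right
    refine ⟨hP, hS, ?_⟩
    have h1 := congrArg derivative h
    simp only [derivative_add, derivative_C] at h1
    have h2 := congrArg derivative h1
    simp only [derivative_add, derivative_zero] at h2
    have h3 := congrArg derivative h2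
    simp only [derivative_add, derivative_zero] at h3
    rw [hu3, hv3, hw3, hz3] at h3
    rw [hu2, hv2, hw2, hz2] at h2
    rw [hu1, hv1, hw1, hz1] at h1
    rw [hu0, hv0, hw0, hz0] at h
    have := aux_dvd_deg (A := P ^ (k - 3)) (x := 1)
      (R := u0 * (v1 * (w2 * z3 - w3 * z2) - w1 * (v2 * z3 - v3 * z2) + z1 * (v2 * w3 - v3 * w2))
        - u1 * (v0 * (w2 * z3 - w3 * z2) - w0 * (v2 * z3 - v3 * z2) + z0 * (v2 * w3 - v3 * w2))
        + u2 * (v0 * (w1 * z3 - w3 * z1) - w0 * (v1 * z3 - v3 * z1) + z0 * (v1 * w3 - v3 * w1))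
        - u3 * (v0 * (w1 * z2 - w2 * z1) - w0 * (v1 * z2 - v2 * z1) + z0 * (v1 * w2 - v2 * w1)))
      hM hD (by
        rw [C_1]
        exact aux_det4 h h1 h2 h3)
    rw [natDegree_pow] at this
    have hb : (v1 * (w2 * z3 - w3 * z2) - w1 * (v2 * z3 - v3 * z2)
        + z1 * (v2 * w3 - v3 * w2)).natDegree
        ≤ 3 * (Q.natDegree + R.natDegree + S.natDegree) - 6 := by
      refine aux_natDegree_add_le (aux_natDegree_sub_le ?_ ?_) ?_
      · refine (aux_natDegree_mul_le hv1d (aux_natDegree_sub_le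
          (a := 3 * R.natDegree + 3 * S.natDegree - 5) ?_ ?_)).trans (by omega)
        · exact (aux_natDegree_mul_le hw2d hz3d).trans (by omega)
        · exact (aux_natDegree_mul_le hw3d hz2d).trans (by omega)
      · refine (aux_natDegree_mul_le hw1d (aux_natDegree_sub_le
          (a := 3 * Q.natDegree + 3 * S.natDegree - 5) ?_ ?_)).trans (by omega)
        · exact (aux_natDegree_mul_le hv2d hz3d).trans (by omega)
        · exact (aux_natDegree_mul_le hv3d hz2d).trans (by omega)
      · refine (aux_natDegree_mul_le hz1d (aux_natDegree_sub_le
          (a := 3 * Q.natDegree + 3 * R.natDegree - 5) ?_ ?_)).trans (by omega)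
        · exact (aux_natDegree_mul_le hv2d hw3d).trans (by omega)
        · exact (aux_natDegree_mul_le hv3d hw2d).trans (by omega)
    have h3 : 10 * P.natDegree ≤ (k - 3) * P.natDegree := Nat.mul_le_mul_right _ (by omega)
    omega

lemma aux_T4 (P Q R S : K[X]) (k q r : ℕ) (hk : 13 ≤ k) (hq : 2 ≤ q) (hr : 2 ≤ r)
    (hP2 : P.natDegree ≤ 2) (hQ2 : Q.natDegree ≤ 2) (hR2 : R.natDegree ≤ 2)
    (hS2 : S.natDegree ≤ 2) (M : K) (hM : M ≠ 0)
    (h : P ^ k + Q ^ q + R ^ r + S ^ k = C M) :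
    NZC (P ^ k) ∨ NZC (Q ^ q) ∨ NZC (R ^ r) ∨ NZC (S ^ k) := by
  rcases aux_T4_deg P Q R S k q r hk hq hr hP2 hQ2 hR2 hS2 M hM h with h1 | h1
  · exact h1
  rcases aux_T4_deg S Q R P k q r hk hq hr hS2 hQ2 hR2 hP2 M hM (by rw [← h]; ring) with h2 | h2
  · tauto
  omega

lemma NZC_deg {P : K[X]} {p : ℕ} (hp : 2 ≤ p) (h : NZC (P ^ p)) : P.natDegree = 0 := by
  obtain ⟨x, -, h⟩ := h
  have := congrArg natDegree h
  rw [natDegree_pow, natDegree_C] at this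
  rcases Nat.mul_eq_zero.mp this with h | h <;> omega

lemma aux_Z2 {P Q : K[X]} {p q : ℕ} (hp : 2 ≤ p) (hq : 2 ≤ q) {M : K} (hM : M ≠ 0)
    (h : P ^ p + Q ^ q = C M) : P.natDegree = 0 ∧ Q.natDegree = 0 := by
  have hd : P.natDegree * p = Q.natDegree * q := by
    have e : P ^ p = -(Q ^ q - C M) := by rw [← h]; ring
    have := congrArg natDegree e
    rw [natDegree_neg, natDegree_sub_C, natDegree_pow, natDegree_pow] at this
    linarith
  rcases aux_T2 P Q p q hp hq 1 1 M hM (by simpa using h) with h1 | h1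
  · have := NZC_deg hp h1
    rw [this, zero_mul] at hd
    rcases Nat.mul_eq_zero.mp hd.symm with h | h <;> omega
  · have := NZC_deg hq h1
    rw [this, zero_mul] at hd
    rcases Nat.mul_eq_zero.mp hd with h | h <;> omega

/-- A `k`-th power with `k` odd plus a smaller power equal to a constant: all constant. -/
lemma aux_pair {P Q : K[X]} {k q : ℕ} (hk : 13 ≤ k) (hodd : Odd k) (hq : 2 ≤ q) (hqk : q < k)
    (hP2 : P.natDegree ≤ 2) (hQ2 : Q.natDegree ≤ 2) {M : K}
    (h : P ^ k + Q ^ q = C M) : P.natDegree = 0 ∧ Q.natDegree = 0 := by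
  have hd : P.natDegree * k = Q.natDegree * q := by
    have e : P ^ k = -(Q ^ q - C M) := by rw [← h]; ring
    have := congrArg natDegree e
    rw [natDegree_neg, natDegree_sub_C, natDegree_pow, natDegree_pow] at this
    linarith
  obtain ⟨j, rfl⟩ := hodd
  generalize P.natDegree = a at *
  generalize Q.natDegree = b at *
  interval_cases a <;> interval_cases b <;> omega

lemma aux_max {f g h : K[X]} (e : f + g + h = 0) : f.natDegree ≤ max g.natDegree h.natDegree := by
  have : f = -(g + h) := by linear_combination e
  rw [this, natDegree_neg]
  exact natDegree_add_le _ _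

/-- The case in which the first term is a nonzero constant. -/
lemma aux_first (k l m : ℕ) (hk13 : 13 ≤ k) (hkodd : Odd k) (hkl : l < k) (hlm : m < l)
    (hm : 2 ≤ m) (N : K) (γ₁ γ₂ γ₃ γ₄ : K[X])
    (hd₂ : γ₂.natDegree ≤ 2) (hd₃ : γ₃.natDegree ≤ 2) (hd₄ : γ₄.natDegree ≤ 2)
    (hnc : 0 < γ₁.natDegree ∨ 0 < γ₂.natDegree ∨ 0 < γ₃.natDegree ∨ 0 < γ₄.natDegree)
    (heq : γ₁ ^ k + γ₂ ^ l + γ₃ ^ m + γ₄ ^ k = C N) (h1 : NZC (γ₁ ^ k)) :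
    γ₂ ^ l + γ₃ ^ m = 0 := by
  have hg1 := NZC_deg (by omega) h1
  obtain ⟨x, hx, e1⟩ := h1
  by_cases hM : N - x = 0
  · have hz : γ₂ ^ l + γ₃ ^ m + γ₄ ^ k = 0 := by
      have : N = x := by linear_combination hM
      rw [e1, this] at heq
      linear_combination heq
    have m1 := aux_max hz
    have m2 := aux_max (f := γ₃ ^ m) (g := γ₂ ^ l) (h := γ₄ ^ k) (by rw [← hz]; ring)
    have m3 := aux_max (f := γ₄ ^ k) (g := γ₂ ^ l) (h := γ₃ ^ m) (by rw [← hz]; ring)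
    simp only [natDegree_pow] at m1 m2 m3
    have h4 : γ₄.natDegree = 0 := by
      obtain ⟨j, rfl⟩ := hkodd
      clear hnc
      generalize γ₂.natDegree = b at *
      generalize γ₃.natDegree = c at *
      generalize γ₄.natDegree = d at *
      interval_cases d <;> interval_cases b <;> interval_cases c <;> omega
    rcases aux_pow_const γ₄ k h4 with h0 | ⟨y, hy, h0⟩
    · rw [h0, add_zero] at hz; exact hz
    · exfalso
      have := aux_Z2 (P := γ₂) (Q := γ₃) (p := l) (q := m) (by omega) hm (neg_ne_zero.mpr hy)
        (by rw [C_neg, ← h0]; linear_combination hz)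
      omega
  · have hs : γ₂ ^ l + γ₃ ^ m + γ₄ ^ k = C (N - x) := by
      rw [C_sub, ← heq, ← e1]; ring
    rcases aux_T3 γ₂ γ₃ γ₄ l m k (by omega) hm (by omega) hd₂ hd₃ hd₄ (by tauto) 1 1 1 _ hM
      (by simpa using hs) with h2 | h2 | h2
    · exfalso
      have hg2 := NZC_deg (by omega) h2
      obtain ⟨y, hy, e2⟩ := h2
      have := aux_pair (P := γ₄) (Q := γ₃) hk13 hkodd hm (by omega) hd₄ hd₃ (M := N - x - y)
        (by rw [C_sub, ← hs, ← e2]; ring)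
      omega
    · exfalso
      have hg2 := NZC_deg (by omega) h2
      obtain ⟨y, hy, e2⟩ := h2
      have := aux_pair (P := γ₄) (Q := γ₂) (q := l) hk13 hkodd (by omega) (by omega) hd₄ hd₂
        (M := N - x - y) (by rw [C_sub, ← hs, ← e2]; ring)
      omega
    · have hg2 := NZC_deg (by omega) h2
      obtain ⟨y, hy, e2⟩ := h2
      have e : γ₂ ^ l + γ₃ ^ m = C (N - x - y) := by rw [C_sub, ← hs, ← e2]; ring
      by_cases h0 : N - x - y = 0
      · rw [e, h0, C_0]
      · exfalso
        have := aux_Z2 (by omega) hm h0 e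
        omega

/-- The case in which a middle term is a nonzero constant. -/
lemma aux_mid (k l m : ℕ) (hk13 : 13 ≤ k) (hkodd : Odd k) (hkl : l < k) (hl : 2 ≤ l) (hmk : m < k)
    (hm : 2 ≤ m) (N : K) (γ₁ γ₂ γ₃ γ₄ : K[X])
    (hd₁ : γ₁.natDegree ≤ 2) (hd₃ : γ₃.natDegree ≤ 2) (hd₄ : γ₄.natDegree ≤ 2)
    (hnc : 0 < γ₁.natDegree ∨ 0 < γ₂.natDegree ∨ 0 < γ₃.natDegree ∨ 0 < γ₄.natDegree)
    (heq : γ₁ ^ k + γ₂ ^ l + γ₃ ^ m + γ₄ ^ k = C N) (h1 : NZC (γ₂ ^ l)) :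
    γ₁ ^ k + γ₄ ^ k = 0 ∨ γ₁ ^ k + γ₃ ^ m + γ₄ ^ k = 0 := by
  have hg1 := NZC_deg (by omega) h1
  obtain ⟨x, hx, e1⟩ := h1
  have hs : γ₁ ^ k + γ₃ ^ m + γ₄ ^ k = C (N - x) := by
    rw [C_sub, ← heq, ← e1]; ring
  by_cases hM : N - x = 0
  · right; rw [hs, hM, C_0]
  left
  rcases aux_T3 γ₁ γ₃ γ₄ k m k (by omega) hm (by omega) hd₁ hd₃ hd₄ (by tauto) 1 1 1 _ hM
    (by simpa using hs) with h2 | h2 | h2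
  · exfalso
    have hg2 := NZC_deg (by omega) h2
    obtain ⟨y, hy, e2⟩ := h2
    have := aux_pair (P := γ₄) (Q := γ₃) hk13 hkodd hm (by omega) hd₄ hd₃ (M := N - x - y)
      (by rw [C_sub, ← hs, ← e2]; ring)
    omega
  · have hg2 := NZC_deg (by omega) h2
    obtain ⟨y, hy, e2⟩ := h2
    have e : γ₁ ^ k + γ₄ ^ k = C (N - x - y) := by rw [C_sub, ← hs, ← e2]; ring
    by_cases h0 : N - x - y = 0
    · rw [e, h0, C_0]
    · exfalso
      have := aux_Z2 (by omega) (by omega) h0 e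
      omega
  · exfalso
    have hg2 := NZC_deg (by omega) h2
    obtain ⟨y, hy, e2⟩ := h2
    have := aux_pair (P := γ₁) (Q := γ₃) hk13 hkodd hm (by omega) hd₁ hd₃ (M := N - x - y)
      (by rw [C_sub, ← hs, ← e2]; ring)
    omega

end aux



theorem lines_conics_in_subvarieties
    {K : Type*} [Field K] [IsAlgClosed K] [CharZero K]
    (k l m : ℕ) (hk13 : 13 ≤ k) (hkodd : Odd k) (hkl : l < k) (hlm : m < l) (hm : 2 ≤ m)
    (N : K) (hN : N ≠ 0)
    (γ₁ γ₂ γ₃ γ₄ : K[X])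
    (hd₁ : γ₁.natDegree ≤ 2) (hd₂ : γ₂.natDegree ≤ 2)
    (hd₃ : γ₃.natDegree ≤ 2) (hd₄ : γ₄.natDegree ≤ 2)
    (hnc : 0 < γ₁.natDegree ∨ 0 < γ₂.natDegree ∨ 0 < γ₃.natDegree ∨ 0 < γ₄.natDegree)
    (heq : γ₁ ^ k + γ₂ ^ l + γ₃ ^ m + γ₄ ^ k = C N) :
    γ₁ ^ k + γ₄ ^ k = 0 ∨ γ₂ ^ l + γ₃ ^ m = 0 ∨
    γ₁ ^ k + γ₂ ^ l + γ₄ ^ k = 0 ∨ γ₁ ^ k + γ₃ ^ m + γ₄ ^ k = 0 := by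
  rcases aux_T4 γ₁ γ₂ γ₃ γ₄ k l m hk13 (by omega) hm hd₁ hd₂ hd₃ hd₄ N hN heq with h | h | h | h
  · right; left
    exact aux_first k l m hk13 hkodd hkl hlm hm N γ₁ γ₂ γ₃ γ₄ hd₂ hd₃ hd₄ hnc heq h
  · have := aux_mid k l m hk13 hkodd hkl (by omega) (by omega) hm N γ₁ γ₂ γ₃ γ₄ hd₁ hd₃ hd₄
      hnc heq h
    tauto
  · have := aux_mid k m l hk13 hkodd (by omega) hm hkl (by omega) N γ₁ γ₃ γ₂ γ₄ hd₁ hd₂ hd₄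
      (by tauto) (by rw [← heq]; ring) h
    tauto
  · right; left
    exact aux_first k l m hk13 hkodd hkl hlm hm N γ₄ γ₂ γ₃ γ₁ hd₂ hd₃ hd₁ (by tauto)
      (by rw [← heq]; ring) h
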